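/- Let s_n = |SEP(n)|. Then s_n ~ (1/(2^{3/4}√π))·(3 − 2√2)^{−n+1/2}·n^{−3/2} as n→∞; that is, lim_{n→∞} s_n · 2^{3/4}√π · n^{3/2} · (3 − 2√2)^{n−1/2} = 1. -/

import Mathlib

open Finset Filter Real
open scoped Classical

/-- `σ` contains the pattern `τ` (a permutation of `Fin k` given as a function). -/
def ContainsPattern {n k : ℕ} (σ : Equiv.Perm (Fin n)) (τ : Fin k → Fin k) : Prop :=
  ∃ f : Fin k → Fin n, StrictMono f ∧ ∀ a b : Fin k, τ a < τ b ↔ σ (f a) < σ (f b)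

/-- A permutation is separable iff it avoids the patterns 2413 and 3142. -/
def Separable {n : ℕ} (σ : Equiv.Perm (Fin n)) : Prop :=
  ¬ ContainsPattern σ (![1, 3, 0, 2] : Fin 4 → Fin 4) ∧
  ¬ ContainsPattern σ (![2, 0, 3, 1] : Fin 4 → Fin 4)

/-- The set of separable permutations of `[n]`. -/
noncomputable def SEP (n : ℕ) : Finset (Equiv.Perm (Fin n)) :=
  Finset.univ.filter fun σ => Separable σ

/-- `IsAltSeq σ s l` : `l` is a strictly increasing list of indices along which the values of `σ`
alternate, starting with an ascent if `s = true` and starting with a descent if `s = false`. -/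
def IsAltSeq {n : ℕ} (σ : Equiv.Perm (Fin n)) (s : Bool) (l : List (Fin n)) : Prop :=
  l.Chain' (· < ·) ∧
  ∀ j : ℕ, ∀ hj : j + 1 < l.length,
    if decide (j % 2 = 0) = s then
      σ (l.get ⟨j, Nat.lt_of_succ_lt hj⟩) < σ (l.get ⟨j + 1, hj⟩)
    else
      σ (l.get ⟨j + 1, hj⟩) < σ (l.get ⟨j, Nat.lt_of_succ_lt hj⟩)

/-- The length of the longest alternating subsequence of `σ` of type `(s, e)`, where
`true` stands for ascent and `false` for descent.  An alternating subsequence starting with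
an ascent ends with a descent iff its length is odd (and similarly in the other cases), so the
type is encoded by the parity constraint; a singleton counts as a subsequence of types
`(+,-)` and `(-,+)` but not of types `(+,+)` and `(-,-)`. -/
noncomputable def altTypeLen {n : ℕ} (σ : Equiv.Perm (Fin n)) (s e : Bool) : ℕ :=
  sSup {k | ∃ l : List (Fin n), IsAltSeq σ s l ∧ l.length = k ∧
    k % 2 = (if s = e then 0 else 1)}

/-- The length `Aₙ(σ)` of the longest alternating subsequence of `σ`. -/
noncomputable def altLen {n : ℕ} (σ : Equiv.Perm (Fin n)) : ℕ :=
  sSup {k | ∃ l : List (Fin n), (IsAltSeq σ true l ∨ IsAltSeq σ false l) ∧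
    l.length = k ∧ 1 ≤ k}

/-- Expectation with respect to the uniform probability measure on `SEP n`. -/
noncomputable def sepExp (n : ℕ) (f : Equiv.Perm (Fin n) → ℝ) : ℝ :=
  (∑ σ ∈ SEP n, f σ) / (SEP n).card

/-- Variance with respect to the uniform probability measure on `SEP n`. -/
noncomputable def sepVar (n : ℕ) (f : Equiv.Perm (Fin n) → ℝ) : ℝ :=
  sepExp n (fun σ => (f σ - sepExp n f) ^ 2)

/-- `B₁^{+,n}(σ)`: the length of the first indecomposable block (0-indexed positions). -/
noncomputable def Bplus {n : ℕ} (σ : Equiv.Perm (Fin n)) : ℕ :=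
  sInf {j | 1 ≤ j ∧ ∀ i : Fin n, (i : ℕ) < j → (σ i : ℕ) < j}

/-- `B₁^{-,n}(σ)`: the length of the first skew indecomposable block (0-indexed positions). -/
noncomputable def Bminus {n : ℕ} (σ : Equiv.Perm (Fin n)) : ℕ :=
  sInf {j | 1 ≤ j ∧ ∀ i : Fin n, (i : ℕ) < j → n - j ≤ (σ i : ℕ)}

/-- Expectation over indecomposable separable permutations of `[n]`, i.e. the conditional
expectation under the uniform measure on `SEP n` given `{B₁^{+,n} = n}`. -/
noncomputable def indecExp (n : ℕ) (f : Equiv.Perm (Fin n) → ℝ) : ℝ :=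
  (∑ σ ∈ (SEP n).filter (fun σ => Bplus σ = n), f σ) /
    ((SEP n).filter (fun σ => Bplus σ = n)).card

/-! Every separable permutation of length at least two is either a direct sum or a skew sum, never
both, and complementation exchanges the two cases. Splitting off the first block, the generating
functions `S` of the separable and `Q` of the sum indecomposable separable permutations satisfy
`S = 1 + Q S` and `S + x = 1 + 2 Q`, whence `3 - x - 2 S = √(1 - 6x + x²) = √((1 - x/r) (1 - r x))`
with `r = 3 - 2√2`. After rescaling `x` by `r`, the coefficients of `√(1 - x)` are governed by
Euler's product for `Γ(-1/2)`. The other factor `√(1 - r² x)` is analytic beyond the unit disc, so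
by dominated convergence it only contributes its value at `1`. -/

section Words

variable {α : Type*} {n : ℕ}

/-- A cut of a word is a position such that all letters before it are smaller than all letters
from it on. The cuts of a permutation are the positions between the blocks of its decomposition
as a direct sum. The trivial positions `0` and `n` count as cuts. -/
def IsCut [LT α] (f : Fin n → α) (j : ℕ) : Prop :=
  ∀ a b : Fin n, (a : ℕ) < j → j ≤ b → f a < f b

/-- A skew cut is a cut for the reversed order of the letters. -/
def IsSkewCut [LT α] (f : Fin n → α) (j : ℕ) : Prop :=
  IsCut (OrderDual.toDual ∘ f) j

/-- Avoidance of the pattern `3142`, for words over an arbitrary ordered alphabet. Avoidance of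
`2413` is the same property of the word over the dual alphabet. -/
def Avoids3142 [LT α] (f : Fin n → α) : Prop :=
  ∀ a b c d : Fin n, a < b → b < c → c < d → f b < f d → f d < f a → ¬ f a < f c

theorem Avoids3142.comp_strictMono [LT α] {m : ℕ} {f : Fin n → α} (h : Avoids3142 f)
    {g : Fin m → Fin n} (hg : StrictMono g) : Avoids3142 (f ∘ g) :=
  fun _ _ _ _ hab hbc hcd => h _ _ _ _ (hg hab) (hg hbc) (hg hcd)

theorem isCut_self [LT α] (f : Fin n → α) : IsCut f n :=
  fun _ b _ hb => absurd b.isLt hb.not_gt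

theorem IsCut.not_isSkewCut [Preorder α] {f : Fin n → α} {i j : ℕ} (h : IsCut f i)
    (hi : 0 < i) (hin : i < n) (hj : 0 < j) (hjn : j < n) : ¬ IsSkewCut f j := by
  have : NeZero n := ⟨by omega⟩
  intro h'
  exact (h 0 (Fin.rev 0) (by simpa) (by simp; omega)).not_gt
    (h' 0 (Fin.rev 0) (by simpa) (by simp; omega))

variable [LinearOrder α]

/- If some letter before the cut `j` exceeds the last letter, let `l` be the first such letter.
A letter after `l` but before `j` lying below the last letter would form a `3142` with `l`, `j`
and the last letter, so the letters from `l` on exceed the last letter and those before it do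
not. -/
theorem Avoids3142.exists_isCut_or_isSkewCut_snoc {f : Fin (n + 1) → α} {j : ℕ}
    (hf : Function.Injective f) (h : Avoids3142 f) (hj : 0 < j) (hjn : j < n)
    (hcut : IsCut (f ∘ Fin.castSucc) j) :
    ∃ i, 0 < i ∧ i < n + 1 ∧ (IsCut f i ∨ IsSkewCut f i) := by
  have hcut' (a b : Fin (n + 1)) (ha : (a : ℕ) < j) (hb : j ≤ b) (hbn : b < Fin.last n) :
      f a < f b :=
    hcut ⟨a, by omega⟩ ⟨b, hbn⟩ ha hb
  by_cases hlow : ∀ a : Fin (n + 1), (a : ℕ) < j → f a < f (Fin.last n)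
  · refine ⟨j, hj, by omega, .inl fun a b ha hb => ?_⟩
    rcases (Fin.le_last b).lt_or_eq with hbn | rfl
    exacts [hcut' a b ha hb hbn, hlow a ha]
  obtain ⟨l, ⟨hlj, hl⟩, hmin⟩ := wellFounded_lt.has_min
    {l : Fin (n + 1) | (l : ℕ) < j ∧ ¬ f l < f (Fin.last n)} (by simpa [Set.Nonempty] using hlow)
  have hbelow (a : Fin (n + 1)) (ha : a < l) : f a < f (Fin.last n) := by
    by_contra hax
    exact hmin a ⟨by omega, hax⟩ ha
  have hne (b : Fin (n + 1)) (hbn : b < Fin.last n) : f b ≠ f (Fin.last n) := hf.ne hbn.ne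
  have hxl : f (Fin.last n) < f l :=
    (not_lt.1 hl).lt_of_ne' (hne l (Fin.lt_def.2 (by simp; omega)))
  have habove (b : Fin (n + 1)) (hlb : l ≤ b) (hbn : b < Fin.last n) :
      f (Fin.last n) < f b := by
    rcases le_or_gt j b with hbj | hbj
    · exact hxl.trans (hcut' l b hlj hbj hbn)
    rcases hlb.eq_or_lt with rfl | hlb
    · exact hxl
    by_contra hbx
    exact h l b ⟨j, by omega⟩ (Fin.last n) hlb hbj (Fin.lt_def.2 hjn)
      ((not_lt.1 hbx).lt_of_ne (hne b hbn)) hxl (hcut' l _ hlj le_rfl (Fin.lt_def.2 hjn))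
  rcases Nat.eq_zero_or_pos l with hl0 | hl0
  · refine ⟨n, by omega, by omega, .inr fun a b ha hb => ?_⟩
    obtain rfl : b = Fin.last n := Fin.ext (by simp; omega)
    exact habove a (Fin.le_def.2 (by omega)) ha
  · refine ⟨l, hl0, by omega, .inl fun a b ha hb => ?_⟩
    rcases (Fin.le_last b).lt_or_eq with hbn | rfl
    exacts [(hbelow a ha).trans (habove b hb hbn), hbelow a ha]

theorem exists_isCut_or_isSkewCut {f : Fin n → α} (hn : 2 ≤ n) (hf : Function.Injective f)
    (h : Avoids3142 f) (h' : Avoids3142 (OrderDual.toDual ∘ f)) :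
    ∃ j, 0 < j ∧ j < n ∧ (IsCut f j ∨ IsSkewCut f j) := by
  induction n, hn using Nat.le_induction with
  | base =>
    refine ⟨1, one_pos, one_lt_two, (hf.ne Fin.zero_ne_one).lt_or_gt.imp ?_ ?_⟩ <;>
    · intro h01 a b ha hb
      obtain rfl : a = 0 := Fin.ext (by simp; omega)
      obtain rfl : b = 1 := Fin.ext (by simp; omega)
      exact h01
  | succ n _ ih =>
    obtain ⟨j, hj, hjn, hcut | hcut⟩ := ih (hf.comp (Fin.castSucc_injective n))
      (h.comp_strictMono Fin.strictMono_castSucc) (h'.comp_strictMono Fin.strictMono_castSucc)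
    · exact h.exists_isCut_or_isSkewCut_snoc hf hj hjn hcut
    · obtain ⟨i, hi, hin, hcut⟩ := Avoids3142.exists_isCut_or_isSkewCut_snoc
        (f := OrderDual.toDual ∘ f) hf h' hj hjn hcut
      exact ⟨i, hi, hin, hcut.symm⟩

end Words

section Patterns

variable {k m n : ℕ} {σ : Equiv.Perm (Fin n)} {τ : Fin k → Fin k}

theorem containsPattern_3142_iff :
    ContainsPattern σ (![2, 0, 3, 1] : Fin 4 → Fin 4) ↔ ¬ Avoids3142 σ := by
  unfold Avoids3142
  push Not
  constructor
  · rintro ⟨f, hf, h⟩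
    exact ⟨f 0, f 1, f 2, f 3, hf (by decide), hf (by decide), hf (by decide),
      (h 1 3).1 (by decide), (h 3 0).1 (by decide), (h 0 2).1 (by decide)⟩
  · rintro ⟨a, b, c, d, hab, hbc, hcd, hbd, hda, hac⟩
    have hba := hbd.trans hda
    have hbc' := hba.trans hac
    have hdc := hda.trans hac
    refine ⟨![a, b, c, d], by simp [Fin.strictMono_iff_lt_succ, Fin.forall_fin_succ, *], ?_⟩
    intro x y
    fin_cases x <;> fin_cases y <;> simp [*, le_of_lt]

theorem containsPattern_revPerm_mul_iff :
    ContainsPattern (Fin.revPerm * σ) τ ↔ ContainsPattern σ (Fin.rev ∘ τ) := by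
  simp only [ContainsPattern, Equiv.Perm.mul_apply, Fin.revPerm_apply, Function.comp_apply,
    Fin.rev_lt_rev]
  exact exists_congr fun f => and_congr_right fun _ => forall_comm

theorem separable_revPerm_mul_iff : Separable (Fin.revPerm * σ) ↔ Separable σ := by
  have h2413 : Fin.rev ∘ (![1, 3, 0, 2] : Fin 4 → Fin 4) = ![2, 0, 3, 1] := by decide
  have h3142 : Fin.rev ∘ (![2, 0, 3, 1] : Fin 4 → Fin 4) = ![1, 3, 0, 2] := by decide
  rw [Separable, Separable, containsPattern_revPerm_mul_iff, containsPattern_revPerm_mul_iff,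
    h2413, h3142, and_comm]

theorem separable_iff :
    Separable σ ↔ Avoids3142 σ ∧ Avoids3142 (OrderDual.toDual ∘ σ) := by
  have h2413 : Fin.rev ∘ (![2, 0, 3, 1] : Fin 4 → Fin 4) = ![1, 3, 0, 2] := by decide
  have hdual : Avoids3142 ⇑(Fin.revPerm * σ : Equiv.Perm (Fin n)) ↔
      Avoids3142 (OrderDual.toDual ∘ σ) := by
    simp [Avoids3142]
  rw [Separable, ← h2413, ← containsPattern_revPerm_mul_iff, containsPattern_3142_iff,
    containsPattern_3142_iff, not_not, not_not, hdual, and_comm]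

theorem Separable.exists_isCut_or_isSkewCut (hσ : Separable σ) (hn : 2 ≤ n) :
    ∃ j, 0 < j ∧ j < n ∧ (IsCut σ j ∨ IsSkewCut σ j) :=
  have h := separable_iff.1 hσ
  _root_.exists_isCut_or_isSkewCut hn σ.injective h.1 h.2

theorem isCut_revPerm_mul_iff {j : ℕ} : IsCut ⇑(Fin.revPerm * σ : Equiv.Perm (Fin n)) j ↔
    IsSkewCut σ j := by
  simp [IsCut, IsSkewCut]

theorem isCut_iff_forall_lt {i : ℕ} :
    IsCut σ i ↔ ∀ a : Fin n, (a : ℕ) < i → (σ a : ℕ) < i := by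
  constructor
  · intro h a ha
    by_contra! hi
    have hcard : #(Ici (⟨i, by omega⟩ : Fin n)) ≤ #(Ioi (σ a)) :=
      card_le_card_of_injOn σ (fun b hb => mem_Ioi.2 (h a b ha (Fin.le_def.1 (mem_Ici.1 hb))))
        σ.injective.injOn
    simp only [Fin.card_Ici, Fin.card_Ioi] at hcard
    omega
  · intro h a b ha hb
    have hmaps : Set.MapsTo σ {a | (a : ℕ) < i} {a | (a : ℕ) < i} := h
    have hb' : i ≤ σ b := by
      by_contra! hb'
      have hbi := Equiv.Perm.perm_symm_mapsTo_of_mapsTo σ hmaps hb'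
      rw [σ.symm_apply_apply] at hbi
      exact hb.not_gt hbi
    exact Fin.lt_def.2 ((h a ha).trans_le hb')

theorem ContainsPattern.of_strictMono {σ' : Equiv.Perm (Fin m)} (h : ContainsPattern σ τ)
    {e : Fin n → Fin m} (he : StrictMono e) (hσ : ∀ a b, σ' (e a) < σ' (e b) ↔ σ a < σ b) :
    ContainsPattern σ' τ := by
  obtain ⟨f, hf, hfτ⟩ := h
  exact ⟨e ∘ f, he.comp hf, fun a b => (hfτ a b).trans (hσ _ _).symm⟩

end Patterns

/-- The direct sum of two permutations. -/
def directSum {j k : ℕ} (α : Equiv.Perm (Fin j)) (β : Equiv.Perm (Fin k)) :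
    Equiv.Perm (Fin (j + k)) :=
  finSumFinEquiv.permCongr (Equiv.sumCongr α β)

section DirectSum

variable {j k : ℕ} {α : Equiv.Perm (Fin j)} {β : Equiv.Perm (Fin k)}

@[simp] theorem directSum_castAdd (i : Fin j) :
    directSum α β (Fin.castAdd k i) = Fin.castAdd k (α i) := by
  simp [directSum]

@[simp] theorem directSum_natAdd (i : Fin k) :
    directSum α β (Fin.natAdd j i) = Fin.natAdd j (β i) := by
  simp [directSum]

theorem directSum_castAdd_lt_iff {a b : Fin j} :
    directSum α β (Fin.castAdd k a) < directSum α β (Fin.castAdd k b) ↔ α a < α b := by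
  rw [directSum_castAdd, directSum_castAdd, (Fin.strictMono_castAdd k).lt_iff_lt]

theorem directSum_natAdd_lt_iff {a b : Fin k} :
    directSum α β (Fin.natAdd j a) < directSum α β (Fin.natAdd j b) ↔ β a < β b := by
  rw [directSum_natAdd, directSum_natAdd, (Fin.strictMono_natAdd j).lt_iff_lt]

theorem directSum_injective :
    Function.Injective fun p : Equiv.Perm (Fin j) × Equiv.Perm (Fin k) =>
      directSum p.1 p.2 := by
  rintro ⟨α, β⟩ ⟨α', β'⟩ h
  have h := Equiv.ext_iff.1 h
  refine Prod.ext (Equiv.ext fun i => ?_) (Equiv.ext fun i => ?_)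
  · simpa using h (Fin.castAdd k i)
  · simpa using h (Fin.natAdd j i)

theorem isCut_directSum_self : IsCut (directSum α β) j := by
  intro a b ha hb
  induction a using Fin.addCases with
  | right a => exact absurd ha (by simp)
  | left a =>
    induction b using Fin.addCases with
    | left b => exact absurd hb (by simp)
    | right b =>
      rw [directSum_castAdd, directSum_natAdd, Fin.lt_def]
      exact (α a).isLt.trans_le (Nat.le_add_right j _)

theorem isCut_directSum_iff {i : ℕ} (hi : i ≤ j) :
    IsCut (directSum α β) i ↔ IsCut α i := by
  constructor
  · intro h a b ha hb
    exact directSum_castAdd_lt_iff.1 (h (Fin.castAdd k a) (Fin.castAdd k b) ha hb)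
  · intro h a b ha hb
    induction a using Fin.addCases with
    | right a => exact absurd ha (by simp; omega)
    | left a =>
      induction b using Fin.addCases with
      | right b => exact isCut_directSum_self _ _ (by simp) (by simp)
      | left b => exact directSum_castAdd_lt_iff.2 (h a b ha hb)

theorem containsPattern_directSum_iff {m : ℕ} {τ : Fin m → Fin m}
    (hτ : ∀ i, 0 < i → i < m → ¬ IsCut τ i) :
    ContainsPattern (directSum α β) τ ↔ ContainsPattern α τ ∨ ContainsPattern β τ := by
  constructor
  · rintro ⟨f, hf, hfτ⟩
    by_cases hleft : ∀ a, (f a : ℕ) < j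
    · have hg (a) : ∃ b, f a = Fin.castAdd k b := ⟨⟨f a, hleft a⟩, rfl⟩
      choose g hg using hg
      obtain rfl : f = Fin.castAdd k ∘ g := funext hg
      exact .inl ⟨g, hf, fun a b => (hfτ a b).trans directSum_castAdd_lt_iff⟩
    push Not at hleft
    obtain ⟨i, hi, hmin⟩ := wellFounded_lt.has_min {a | j ≤ (f a : ℕ)} hleft
    have hleft (a) (ha : a < i) : (f a : ℕ) < j := not_le.1 fun h => hmin a h ha
    have hright (a) (ha : i ≤ a) : j ≤ (f a : ℕ) := hi.trans (hf.monotone ha)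
    rcases Nat.eq_zero_or_pos i with hi0 | hi0
    · have hg (a) : ∃ b, f a = Fin.natAdd j b :=
        have ha : j ≤ f a := hright a (Fin.le_def.2 (by omega))
        ⟨⟨f a - j, by omega⟩, Fin.ext (Nat.add_sub_cancel' ha).symm⟩
      choose g hg using hg
      obtain rfl : f = Fin.natAdd j ∘ g := funext hg
      exact .inr ⟨g, fun a b hab => by simpa using hf hab,
        fun a b => (hfτ a b).trans directSum_natAdd_lt_iff⟩
    · refine absurd (fun a b ha hb => ?_) (hτ i hi0 i.isLt)
      exact (hfτ a b).2 (isCut_directSum_self _ _ (hleft a ha) (hright b hb))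
  · rintro (h | h)
    · exact h.of_strictMono (Fin.strictMono_castAdd k) fun _ _ => directSum_castAdd_lt_iff
    · exact h.of_strictMono (Fin.strictMono_natAdd j) fun _ _ => directSum_natAdd_lt_iff

theorem separable_directSum_iff :
    Separable (directSum α β) ↔ Separable α ∧ Separable β := by
  have h2413 (i : ℕ) (hi : 0 < i) (hi4 : i < 4) : ¬ IsCut (![1, 3, 0, 2] : Fin 4 → Fin 4) i := by
    unfold IsCut; interval_cases i <;> decide
  have h3142 (i : ℕ) (hi : 0 < i) (hi4 : i < 4) : ¬ IsCut (![2, 0, 3, 1] : Fin 4 → Fin 4) i := by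
    unfold IsCut; interval_cases i <;> decide
  rw [Separable, Separable, Separable, containsPattern_directSum_iff h2413,
    containsPattern_directSum_iff h3142]
  tauto

theorem IsCut.exists_directSum {σ : Equiv.Perm (Fin (j + k))} (h : IsCut σ j) :
    ∃ α β, directSum α β = σ := by
  have hmaps : Set.MapsTo (finSumFinEquiv.symm.permCongr σ)
      (Set.range (Sum.inl : Fin j → Fin j ⊕ Fin k)) (Set.range Sum.inl) := by
    rintro _ ⟨i, rfl⟩
    have hi := isCut_iff_forall_lt.1 h (Fin.castAdd k i) (by simp)
    exact ⟨⟨_, hi⟩, by simp [Equiv.eq_symm_apply]⟩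
  obtain ⟨⟨α, β⟩, hαβ⟩ := Equiv.Perm.mem_sumCongrHom_range_of_perm_mapsTo_inl hmaps
  exact ⟨α, β, by simpa [directSum, ← Equiv.permCongr_symm, Equiv.eq_symm_apply] using hαβ⟩

end DirectSum

section Blocks

variable {n : ℕ} {σ : Equiv.Perm (Fin n)}

theorem isLeast_Bplus (σ : Equiv.Perm (Fin n)) : IsLeast {j | 0 < j ∧ IsCut σ j} (Bplus σ) := by
  have h : Bplus σ = sInf {j | 0 < j ∧ IsCut σ j} := by simp only [isCut_iff_forall_lt]; rfl
  have hne : {j | 0 < j ∧ IsCut σ j}.Nonempty :=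
    ⟨n + 1, n.succ_pos, isCut_iff_forall_lt.2 fun a _ => (σ a).isLt.trans n.lt_succ_self⟩
  rw [h]
  exact ⟨Nat.sInf_mem hne, fun _ => Nat.sInf_le⟩

theorem Bplus_pos (σ : Equiv.Perm (Fin n)) : 0 < Bplus σ := (isLeast_Bplus σ).1.1

theorem Bplus_le (σ : Equiv.Perm (Fin n)) (hn : 0 < n) : Bplus σ ≤ n :=
  (isLeast_Bplus σ).2 ⟨hn, isCut_self σ⟩

theorem Bplus_eq_iff {j : ℕ} (hj : 0 < j) :
    Bplus σ = j ↔ IsCut σ j ∧ ∀ i, 0 < i → i < j → ¬ IsCut σ i := by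
  constructor
  · rintro rfl
    exact ⟨(isLeast_Bplus σ).1.2, fun i hi hij h => hij.not_ge ((isLeast_Bplus σ).2 ⟨hi, h⟩)⟩
  · rintro ⟨hcut, hmin⟩
    exact (isLeast_Bplus σ).unique
      ⟨⟨hj, hcut⟩, fun i hi => not_lt.1 fun hij => hmin i hi.1 hij hi.2⟩

theorem Bplus_eq_self_iff (hn : 0 < n) :
    Bplus σ = n ↔ ∀ i, 0 < i → i < n → ¬ IsCut σ i := by
  simp only [Bplus_eq_iff hn, isCut_self, true_and]

theorem Bplus_directSum_eq_iff {j k : ℕ} {α : Equiv.Perm (Fin j)} {β : Equiv.Perm (Fin k)}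
    (hj : 0 < j) : Bplus (directSum α β) = j ↔ Bplus α = j := by
  rw [Bplus_eq_iff hj, Bplus_eq_self_iff hj]
  simp only [isCut_directSum_self, true_and]
  exact forall₃_congr fun i _ hij => not_congr (isCut_directSum_iff hij.le)

theorem Separable.Bplus_revPerm_mul_eq_iff (hσ : Separable σ) (hn : 2 ≤ n) :
    Bplus (Fin.revPerm * σ) = n ↔ Bplus σ ≠ n := by
  rw [ne_eq, Bplus_eq_self_iff (by omega), Bplus_eq_self_iff (by omega)]
  simp only [isCut_revPerm_mul_iff]
  push Not
  constructor
  · intro h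
    obtain ⟨j, hj, hjn, hcut | hcut⟩ := hσ.exists_isCut_or_isSkewCut hn
    exacts [⟨j, hj, hjn, hcut⟩, absurd hcut (h j hj hjn)]
  · rintro ⟨i, hi, hin, hcut⟩ j hj hjn
    exact hcut.not_isSkewCut hi hin hj hjn

end Blocks

section Counting

/-- The number of sum indecomposable separable permutations of `[n]`. -/
noncomputable def indecCard (n : ℕ) : ℕ := #{σ ∈ SEP n | Bplus σ = n}

theorem card_filter_Bplus_eq {j : ℕ} (hj : 0 < j) (k : ℕ) :
    #{σ ∈ SEP (j + k) | Bplus σ = j} = indecCard j * #(SEP k) := by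
  rw [indecCard, ← card_product]
  symm
  refine card_bij (fun p _ => directSum p.1 p.2) ?_ (fun _ _ _ _ h => directSum_injective h) ?_
  · rintro ⟨α, β⟩ h
    simp_all [SEP, separable_directSum_iff, Bplus_directSum_eq_iff]
  · intro σ h
    simp only [SEP, mem_filter, mem_univ, true_and] at h
    obtain ⟨α, β, rfl⟩ := ((Bplus_eq_iff hj).1 h.2).1.exists_directSum
    rw [separable_directSum_iff, Bplus_directSum_eq_iff hj] at h
    exact ⟨(α, β), by simp [SEP, h], rfl⟩

theorem indecCard_zero : indecCard 0 = 0 := by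
  simp only [indecCard, card_eq_zero, filter_eq_empty_iff]
  exact fun σ _ => (Bplus_pos σ).ne'

theorem card_SEP_eq_sum {n : ℕ} (hn : 0 < n) :
    #(SEP n) = ∑ p ∈ antidiagonal n, indecCard p.1 * #(SEP p.2) := by
  have hle : ∀ σ ∈ SEP n, Bplus σ ∈ range (n + 1) := fun σ _ =>
    mem_range_succ_iff.2 (Bplus_le σ hn)
  rw [card_eq_sum_card_fiberwise hle,
    Nat.sum_antidiagonal_eq_sum_range_succ fun j k => indecCard j * #(SEP k)]
  refine sum_congr rfl fun j hj => ?_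
  rcases Nat.eq_zero_or_pos j with rfl | hj0
  · simp [indecCard_zero, (Bplus_pos _).ne']
  · obtain ⟨k, rfl⟩ := Nat.exists_eq_add_of_le (mem_range_succ_iff.1 hj)
    rw [card_filter_Bplus_eq hj0 k, Nat.add_sub_cancel_left]

/- By complementation: a separable permutation of length at least two is sum decomposable exactly
when its complement is not. -/
theorem card_SEP_eq_two_mul {n : ℕ} (hn : 2 ≤ n) : #(SEP n) = 2 * indecCard n := by
  have hcompl : #{σ ∈ SEP n | Bplus σ = n} = #{σ ∈ SEP n | Bplus σ ≠ n} := by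
    refine card_equiv (Equiv.mulLeft Fin.revPerm) fun σ => ?_
    simp only [SEP, mem_filter, mem_univ, true_and, Equiv.coe_mulLeft, separable_revPerm_mul_iff]
    exact and_congr_right fun hσ => by rw [ne_eq, hσ.Bplus_revPerm_mul_eq_iff hn, ne_eq, not_not]
  rw [← card_filter_add_card_filter_not (s := SEP n) (fun σ => Bplus σ = n), indecCard, two_mul]
  exact congrArg _ hcompl.symm

theorem card_SEP_of_le_one {n : ℕ} (hn : n ≤ 1) : #(SEP n) = 1 := by
  have : Subsingleton (Fin n) := Fin.subsingleton_iff_le_one.2 hn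
  have hsep (σ : Equiv.Perm (Fin n)) : Separable σ := by
    rw [separable_iff]
    exact ⟨fun a b _ _ hab => absurd (Subsingleton.elim a b) hab.ne,
      fun a b _ _ hab => absurd (Subsingleton.elim a b) hab.ne⟩
  rw [SEP, filter_true_of_mem fun σ _ => hsep σ, card_univ, Fintype.card_unique]

theorem indecCard_one : indecCard 1 = 1 := by
  have h : #(SEP 1) = ∑ p ∈ antidiagonal 1, indecCard p.1 * #(SEP p.2) := card_SEP_eq_sum one_pos
  simpa [card_SEP_of_le_one, Nat.antidiagonal_succ, indecCard_zero] using h.symm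

end Counting

section GeneratingFunction

open PowerSeries

/-- The ordinary generating function of the separable permutations. -/
noncomputable def sepGenFun : ℝ⟦X⟧ := .mk fun n => (#(SEP n) : ℝ)

/-- The ordinary generating function of the sum indecomposable separable permutations. -/
noncomputable def indecGenFun : ℝ⟦X⟧ := .mk fun n => (indecCard n : ℝ)

theorem coeff_sepGenFun (n : ℕ) : coeff n sepGenFun = #(SEP n) :=
  coeff_mk _ _

theorem constantCoeff_sepGenFun : constantCoeff sepGenFun = 1 := by
  rw [← coeff_zero_eq_constantCoeff_apply, coeff_sepGenFun, card_SEP_of_le_one zero_le_one,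
    Nat.cast_one]

theorem coeff_indecGenFun (n : ℕ) : coeff n indecGenFun = indecCard n :=
  coeff_mk _ _

theorem sepGenFun_eq_one_add_mul : sepGenFun = 1 + indecGenFun * sepGenFun := by
  ext n
  rcases Nat.eq_zero_or_pos n with rfl | hn
  · simp [sepGenFun, indecGenFun, card_SEP_of_le_one, indecCard_zero]
  · simp [coeff_mul, coeff_one, coeff_sepGenFun, coeff_indecGenFun, hn.ne', card_SEP_eq_sum hn]

theorem sepGenFun_add_X : sepGenFun + X = 1 + 2 * indecGenFun := by
  ext n
  rw [two_mul]
  simp only [map_add, coeff_sepGenFun, coeff_indecGenFun, coeff_X, coeff_one]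
  match n with
  | 0 => simp [card_SEP_of_le_one, indecCard_zero]
  | 1 => simp [card_SEP_of_le_one, indecCard_one]
  | n + 2 => simp [card_SEP_eq_two_mul, two_mul]

theorem sq_three_sub_X_sub_two_mul_sepGenFun :
    (3 - X - 2 * sepGenFun) ^ 2 = 1 - 6 * X + X ^ 2 := by
  linear_combination -8 * sepGenFun_eq_one_add_mul + 4 * sepGenFun * sepGenFun_add_X

end GeneratingFunction

section BinomialSeries

open PowerSeries

theorem constantCoeff_rescale {R : Type*} [CommSemiring R] (r : R) (A : R⟦X⟧) :
    constantCoeff (rescale r A) = constantCoeff A := by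
  rw [← coeff_zero_eq_constantCoeff_apply, coeff_rescale, pow_zero, one_mul,
    coeff_zero_eq_constantCoeff_apply]

/-- The power series of `(1 - x) ^ a` at `x = 0`. -/
noncomputable def oneSubPow (a : ℝ) : ℝ⟦X⟧ := rescale (-1) (PowerSeries.binomialSeries ℝ a)

theorem oneSubPow_add (a b : ℝ) : oneSubPow (a + b) = oneSubPow a * oneSubPow b := by
  simp [oneSubPow]

theorem oneSubPow_one : oneSubPow 1 = 1 - X := by
  have h : PowerSeries.binomialSeries ℝ (1 : ℝ) = 1 + X := by
    simpa using binomialSeries_nat (A := ℝ) (R := ℝ) 1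
  rw [oneSubPow, h, map_add, map_one, rescale_X, map_neg, map_one, neg_one_mul, sub_eq_add_neg]

theorem sq_oneSubPow_half : oneSubPow (1 / 2) ^ 2 = 1 - X := by
  rw [sq, ← oneSubPow_add, add_halves, oneSubPow_one]

theorem constantCoeff_oneSubPow (a : ℝ) : constantCoeff (oneSubPow a) = 1 := by
  rw [oneSubPow, constantCoeff_rescale, binomialSeries_constantCoeff]

theorem coeff_oneSubPow (a : ℝ) (n : ℕ) : coeff n (oneSubPow a) = Ring.multichoose (-a) n := by
  have h := Ring.choose_neg' (-a) n
  rw [neg_neg, Units.smul_def, zsmul_eq_mul, Int.coe_negOnePow_natCast] at h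
  rw [oneSubPow, coeff_rescale, binomialSeries_coeff, h, smul_eq_mul, mul_one, ← mul_assoc]
  push_cast
  rw [← mul_pow, neg_one_mul, neg_neg, one_pow, one_mul]

theorem hasSum_coeff_oneSubPow (a : ℝ) {x : ℝ} (hx : |x| < 1) :
    HasSum (fun n => coeff n (oneSubPow a) * x ^ n) ((1 - x) ^ a) := by
  have hball : x ∈ Metric.eball (0 : ℝ) 1 := by simpa [← ENNReal.ofReal_one] using hx
  have h := (Real.one_div_one_sub_rpow_hasFPowerSeriesOnBall_zero (-a)).hasSum hball
  have hx' : 0 ≤ 1 - x := by linarith [le_abs_self x]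
  simpa [FormalMultilinearSeries.ofScalars_apply_eq, coeff_oneSubPow, Ring.multichoose_eq,
    Real.rpow_neg hx', mul_comm] using h

theorem multichoose_eq_prod_div_factorial (s : ℝ) (n : ℕ) :
    Ring.multichoose s n = (∏ j ∈ range n, (s + j)) / n.factorial := by
  have h := Ring.factorial_nsmul_multichoose_eq_ascPochhammer s n
  rw [Polynomial.ascPochhammer_smeval_eq_eval, nsmul_eq_mul] at h
  rw [eq_div_iff (by positivity), mul_comm, h]
  clear h
  induction n with
  | zero => simp
  | succ n ih => rw [ascPochhammer_succ_eval, ih, prod_range_succ]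

/- The product formula for the coefficient is, up to the factor `n / (n - a)`, the inverse of
Euler's product for `Γ(-a)`. -/
theorem tendsto_rpow_mul_coeff_oneSubPow {a : ℝ} (ha : ∀ m : ℕ, a ≠ m) :
    Tendsto (fun n : ℕ => (n : ℝ) ^ (a + 1) * coeff n (oneSubPow a)) atTop
      (nhds (Real.Gamma (-a))⁻¹) := by
  have hΓ : Real.Gamma (-a) ≠ 0 := Real.Gamma_ne_zero fun m => by simpa using ha m
  have h := (tendsto_natCast_div_add_atTop (-a)).mul
    ((Real.GammaSeq_tendsto_Gamma (-a)).inv₀ hΓ)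
  rw [one_mul] at h
  refine h.congr' ?_
  filter_upwards [eventually_gt_atTop 0] with n hn
  have hn0 : (n : ℝ) ≠ 0 := by positivity
  have hna : (n : ℝ) + -a ≠ 0 := by
    rw [← sub_eq_add_neg, sub_ne_zero]
    exact (ha n).symm
  rw [coeff_oneSubPow, multichoose_eq_prod_div_factorial, Real.GammaSeq, prod_range_succ,
    Real.rpow_add_one hn0, Real.rpow_neg (by positivity), add_comm (-a) n]
  field_simp

end BinomialSeries

section Transfer

variable {p L : ℝ} {a : ℕ → ℝ}

theorem tendsto_add_rpow_mul {c : ℝ} (hc : 0 ≤ c)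
    (ha : Tendsto (fun n : ℕ => (n : ℝ) ^ p * a n) atTop (nhds L)) :
    Tendsto (fun n : ℕ => ((n : ℝ) + c) ^ p * a n) atTop (nhds L) := by
  have hratio : Tendsto (fun n : ℕ => (1 + c / (n : ℝ)) ^ p) atTop (nhds 1) := by
    simpa using ((tendsto_const_div_atTop_nhds_zero_nat c).const_add 1).rpow_const
      (p := p) (by simp)
  have h := hratio.mul ha
  rw [one_mul] at h
  refine h.congr' ?_
  filter_upwards [eventually_gt_atTop 0] with n hn
  have hn0 : (n : ℝ) ≠ 0 := by positivity
  rw [← mul_assoc, ← Real.mul_rpow (by positivity) (by positivity), add_mul, one_mul,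
    div_mul_cancel₀ _ hn0]

theorem tendsto_rpow_mul_sub (k : ℕ)
    (ha : Tendsto (fun n : ℕ => (n : ℝ) ^ p * a n) atTop (nhds L)) :
    Tendsto (fun n : ℕ => (n : ℝ) ^ p * a (n - k)) atTop (nhds L) := by
  rw [← tendsto_add_atTop_iff_nat k]
  simpa using tendsto_add_rpow_mul k.cast_nonneg ha

theorem rpow_add_le_rpow_mul_rpow (hp : 0 ≤ p) (k m : ℕ) :
    ((k + m : ℕ) : ℝ) ^ p ≤ ((k : ℝ) + 1) ^ p * ((m : ℝ) + 1) ^ p := by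
  rw [← Real.mul_rpow (by positivity) (by positivity)]
  refine Real.rpow_le_rpow (by positivity) ?_ hp
  push_cast
  nlinarith [(by positivity : (0 : ℝ) ≤ k * m)]

theorem exists_add_one_rpow_mul_abs_le
    (ha : Tendsto (fun n : ℕ => (n : ℝ) ^ p * a n) atTop (nhds L)) :
    ∃ M, ∀ n : ℕ, ((n : ℝ) + 1) ^ p * |a n| ≤ M := by
  obtain ⟨M, hM⟩ := (tendsto_add_rpow_mul zero_le_one ha).abs.bddAbove_range
  refine ⟨M, fun n => ?_⟩
  rw [← abs_of_nonneg (by positivity : 0 ≤ ((n : ℝ) + 1) ^ p), ← abs_mul]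
  exact hM ⟨n, rfl⟩

theorem exists_rpow_mul_abs_sub_le (hp : 0 ≤ p)
    (ha : Tendsto (fun n : ℕ => (n : ℝ) ^ p * a n) atTop (nhds L)) :
    ∃ M, ∀ n k : ℕ, k ≤ n → (n : ℝ) ^ p * |a (n - k)| ≤ M * ((k : ℝ) + 1) ^ p := by
  obtain ⟨M, hM⟩ := exists_add_one_rpow_mul_abs_le ha
  refine ⟨M, fun n k hkn => ?_⟩
  obtain ⟨m, rfl⟩ := Nat.exists_eq_add_of_le hkn
  rw [Nat.add_sub_cancel_left]
  calc ((k + m : ℕ) : ℝ) ^ p * |a m|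
      ≤ ((k : ℝ) + 1) ^ p * ((m : ℝ) + 1) ^ p * |a m| := by
        gcongr
        exact rpow_add_le_rpow_mul_rpow hp k m
    _ = ((m : ℝ) + 1) ^ p * |a m| * ((k : ℝ) + 1) ^ p := by ring
    _ ≤ M * ((k : ℝ) + 1) ^ p := by
        gcongr
        exact hM m

open PowerSeries

variable {A B : ℝ⟦X⟧}

theorem summable_rpow_mul_abs_coeff_rescale {x : ℝ} (hx : |x| < 1)
    (hA : Tendsto (fun n : ℕ => (n : ℝ) ^ p * coeff n A) atTop (nhds L)) :
    Summable fun k : ℕ => ((k : ℝ) + 1) ^ p * |coeff k (rescale x A)| := by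
  obtain ⟨M, hM⟩ := exists_add_one_rpow_mul_abs_le hA
  refine Summable.of_nonneg_of_le (fun k => by positivity) (fun k => ?_)
    ((summable_geometric_of_lt_one (abs_nonneg x) hx).mul_left M)
  rw [coeff_rescale, abs_mul, abs_pow, mul_left_comm, mul_comm M]
  gcongr
  exact hM k

theorem tendsto_rpow_mul_coeff_mul (hp : 0 ≤ p)
    (hA : Tendsto (fun n : ℕ => (n : ℝ) ^ p * coeff n A) atTop (nhds L))
    (hB : Summable fun k : ℕ => ((k : ℝ) + 1) ^ p * |coeff k B|) :
    Tendsto (fun n : ℕ => (n : ℝ) ^ p * coeff n (A * B)) atTop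
      (nhds (L * ∑' k, coeff k B)) := by
  obtain ⟨M, hM⟩ := exists_rpow_mul_abs_sub_le hp hA
  let f (n k : ℕ) : ℝ :=
    if k ≤ n then (n : ℝ) ^ p * coeff (n - k) A * coeff k B else 0
  have htsum (n : ℕ) : ∑' k, f n k = (n : ℝ) ^ p * coeff n (A * B) := by
    rw [tsum_eq_sum (s := range (n + 1)) fun k hk => if_neg (by simpa using hk), mul_comm A,
      coeff_mul, Nat.sum_antidiagonal_eq_sum_range_succ (fun i j => coeff i B * coeff j A),
      mul_sum]
    refine sum_congr rfl fun k hk => ?_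
    rw [if_pos (mem_range_succ_iff.1 hk)]
    ring
  have hlim (k : ℕ) : Tendsto (f · k) atTop (nhds (L * coeff k B)) := by
    refine ((tendsto_rpow_mul_sub k hA).mul_const (coeff k B)).congr' ?_
    filter_upwards [eventually_ge_atTop k] with n hkn using (if_pos hkn).symm
  have hbound (n k : ℕ) : ‖f n k‖ ≤ M * (((k : ℝ) + 1) ^ p * |coeff k B|) := by
    rw [← mul_assoc]
    by_cases hkn : k ≤ n
    · rw [show f n k = _ from if_pos hkn, norm_mul, norm_mul, Real.norm_eq_abs, Real.norm_eq_abs,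
        Real.norm_eq_abs, abs_of_nonneg (by positivity : 0 ≤ (n : ℝ) ^ p)]
      exact mul_le_mul_of_nonneg_right (hM n k hkn) (abs_nonneg _)
    · rw [show f n k = 0 from if_neg hkn, norm_zero]
      have hM0 : 0 ≤ M := by
        simpa using (by positivity : 0 ≤ ((0 : ℕ) : ℝ) ^ p * |coeff 0 A|).trans (hM 0 0 le_rfl)
      positivity
  simp_rw [← htsum, ← tsum_mul_left]
  exact tendsto_tsum_of_dominated_convergence (hB.mul_left M) hlim (.of_forall hbound)

end Transfer

section Asymptotics

open PowerSeries

/-- The smaller root `3 - 2√2` of `1 - 6x + x²`, which is the radius of convergence of the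
generating function of the separable permutations. -/
noncomputable def sepRadius : ℝ := 3 - 2 * √2

theorem sepRadius_pos : 0 < sepRadius := by
  have h : √2 ^ 2 = 2 := Real.sq_sqrt (by norm_num)
  rw [sepRadius]
  nlinarith [Real.sqrt_nonneg 2]

theorem one_add_sepRadius_sq : 1 + sepRadius ^ 2 = 6 * sepRadius := by
  have h : √2 ^ 2 = 2 := Real.sq_sqrt (by norm_num)
  rw [sepRadius]
  linear_combination 4 * h

theorem one_sub_sepRadius_sq : 1 - sepRadius ^ 2 = 2 ^ 2 * √2 * sepRadius := by
  have h : √2 ^ 2 = 2 := Real.sq_sqrt (by norm_num)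
  rw [sepRadius]
  linear_combination 4 * h

theorem abs_sepRadius_sq_lt_one : |sepRadius ^ 2| < 1 := by
  have h : 0 < 1 - sepRadius ^ 2 := by
    rw [one_sub_sepRadius_sq]
    exact mul_pos (by positivity) sepRadius_pos
  rw [abs_of_nonneg (sq_nonneg _)]
  linarith

theorem rpow_half_one_sub_sepRadius_sq :
    (1 - sepRadius ^ 2) ^ (1 / 2 : ℝ) = 2 * 2 ^ (1 / 4 : ℝ) * sepRadius ^ (1 / 2 : ℝ) := by
  rw [one_sub_sepRadius_sq, Real.mul_rpow (by positivity) sepRadius_pos.le,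
    Real.mul_rpow (by positivity) (by positivity), ← Real.sqrt_eq_rpow (2 ^ 2),
    Real.sqrt_sq (by norm_num), Real.sqrt_eq_rpow, ← Real.rpow_mul (by norm_num)]
  norm_num

/- Both sides have square `1 - 6rx + r²x² = (1 - x)(1 - r²x)`, where `r` is the radius. -/
theorem rescale_three_sub_X_sub_two_mul_sepGenFun :
    rescale sepRadius (3 - X - 2 * sepGenFun) =
      oneSubPow (1 / 2) * rescale (sepRadius ^ 2) (oneSubPow (1 / 2)) := by
  have hsq : rescale sepRadius (3 - X - 2 * sepGenFun) ^ 2 =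
      (oneSubPow (1 / 2) * rescale (sepRadius ^ 2) (oneSubPow (1 / 2))) ^ 2 := by
    have hr : (1 + C sepRadius ^ 2 : ℝ⟦X⟧) = 6 * C sepRadius := by
      rw [← map_one C, ← map_pow, ← map_add, one_add_sepRadius_sq, map_mul, map_ofNat]
    rw [← map_pow, sq_three_sub_X_sub_two_mul_sepGenFun, mul_pow, ← map_pow, sq_oneSubPow_half]
    simp only [map_sub, map_add, map_mul, map_pow, map_one, map_ofNat, rescale_X]
    linear_combination X * hr
  refine (sq_eq_sq_iff_eq_or_eq_neg.1 hsq).resolve_right fun h => ?_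
  have h0 := congrArg constantCoeff h
  rw [constantCoeff_rescale, map_neg, map_mul, constantCoeff_rescale, constantCoeff_oneSubPow,
    map_sub, map_sub, map_mul, constantCoeff_sepGenFun, constantCoeff_X, map_ofNat,
    map_ofNat] at h0
  norm_num at h0

theorem coeff_oneSubPow_half_mul_rescale {n : ℕ} (hn : 2 ≤ n) :
    coeff n (oneSubPow (1 / 2) * rescale (sepRadius ^ 2) (oneSubPow (1 / 2))) =
      -2 * (sepRadius ^ n * #(SEP n)) := by
  rw [← rescale_three_sub_X_sub_two_mul_sepGenFun, coeff_rescale, map_sub, map_sub,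
    ← map_ofNat C 2, ← map_ofNat C 3, coeff_C_mul, coeff_sepGenFun]
  simp only [coeff_C, coeff_X, show n ≠ 0 by omega, show n ≠ 1 by omega, if_false]
  ring

theorem Gamma_neg_half : Real.Gamma (-(1 / 2)) = -2 * √π := by
  have h := Real.Gamma_add_one (s := -(1 / 2)) (by norm_num)
  rw [show -(1 / 2) + 1 = (1 / 2 : ℝ) by norm_num, Real.Gamma_one_half_eq] at h
  linarith

theorem tendsto_rpow_mul_coeff_oneSubPow_half :
    Tendsto (fun n : ℕ => (n : ℝ) ^ (3 / 2 : ℝ) * coeff n (oneSubPow (1 / 2))) atTop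
      (nhds (-2 * √π)⁻¹) := by
  have hhalf (m : ℕ) : (1 / 2 : ℝ) ≠ m := by
    intro h
    have h' : 1 = 2 * m := by
      exact_mod_cast (by linarith : (1 : ℝ) = 2 * m)
    omega
  have h := tendsto_rpow_mul_coeff_oneSubPow hhalf
  rwa [Gamma_neg_half, show (1 / 2 + 1 : ℝ) = 3 / 2 by norm_num] at h

theorem tendsto_rpow_mul_sepRadius_pow_mul_card_SEP :
    Tendsto (fun n : ℕ => (n : ℝ) ^ (3 / 2 : ℝ) * (sepRadius ^ n * #(SEP n))) atTop
      (nhds (2 ^ (1 / 4 : ℝ) * sepRadius ^ (1 / 2 : ℝ) / (2 * √π))) := by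
  have hA := tendsto_rpow_mul_coeff_oneSubPow_half
  have hsum : ∑' k, coeff k (rescale (sepRadius ^ 2) (oneSubPow (1 / 2))) =
      2 * 2 ^ (1 / 4 : ℝ) * sepRadius ^ (1 / 2 : ℝ) := by
    rw [← rpow_half_one_sub_sepRadius_sq]
    simpa [coeff_rescale, mul_comm] using
      (hasSum_coeff_oneSubPow (1 / 2) abs_sepRadius_sq_lt_one).tsum_eq
  have h := (tendsto_rpow_mul_coeff_mul (by norm_num) hA
    (summable_rpow_mul_abs_coeff_rescale abs_sepRadius_sq_lt_one hA)).const_mul (-(1 / 2))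
  rw [hsum] at h
  convert h.congr' ?_ using 2
  · field_simp
  · filter_upwards [eventually_ge_atTop 2] with n hn
    rw [coeff_oneSubPow_half_mul_rescale hn]
    ring

end Asymptotics

/-- `sₙ ~ (1/(2^{3/4}√π)) (3 - 2√2)^{-n + 1/2} n^{-3/2}`. -/
theorem sep_card_asymp :
    Tendsto (fun n : ℕ => ((SEP n).card : ℝ) * (2 : ℝ) ^ ((3 : ℝ) / 4) * Real.sqrt π *
        (n : ℝ) ^ ((3 : ℝ) / 2) * (3 - 2 * Real.sqrt 2) ^ ((n : ℝ) - 1 / 2)) atTop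
      (nhds 1) := by
  have h2 : (2 : ℝ) ^ (3 / 4 : ℝ) * 2 ^ (1 / 4 : ℝ) = 2 := by
    rw [← Real.rpow_add two_pos]
    norm_num
  have hr : 0 < sepRadius ^ (1 / 2 : ℝ) := Real.rpow_pos_of_pos sepRadius_pos _
  have h := tendsto_rpow_mul_sepRadius_pow_mul_card_SEP.const_mul
    ((2 : ℝ) ^ (3 / 4 : ℝ) * √π / sepRadius ^ (1 / 2 : ℝ))
  convert h using 2 with n
  · rw [← sepRadius, Real.rpow_sub sepRadius_pos, Real.rpow_natCast]
    ring
  · field_simp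
    exact h2.symm
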